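/- Let f : ℝ → ℂ be an even Schwartz function with ∫_ℝ f(x) dx = 0. Then the function z ↦ ∫₀^∞ (ℰf)(u) u^{−iz} d*u is well-defined and holomorphic on the half-plane 𝔥 = {z ∈ ℂ : Im(z) > −1/2}, and for every z ∈ 𝔥 with z ≠ i/2 one has ∫₀^∞ (ℰf)(u) u^{−iz} d*u = ζ(1/2 − iz) · ψ_f(z). -/

import Mathlib

/-!
Put `F(u) = ∑_{n ≥ 1} f(nu)` and `s = 1/2 - iz`. The integral in question is the Mellin transform
of `F` at `s`, `ψ_f(z)` is the Mellin transform of `f` at `s`, and `Im z > -1/2` becomes `Re s > 0`.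

At infinity `F` decays as fast as `f` does. Near `0` it is merely bounded: `u F(u)` is a Riemann sum
of step `u` for `∫₀^∞ f`, which is `0` because `f` is even, and the error of such a sum is at most
`u ∫₀^∞ ‖f'‖`. Hence the Mellin transform of `F` converges and is holomorphic for `Re s > 0`.

For `Re s > 1` sum and integral can be interchanged, so that the Mellin transform of `F` is `ζ(s)`
times that of `f`. After multiplication by `s - 1`, which removes the pole of `ζ`, both sides are
holomorphic for `Re s > 0`, and the identity theorem carries the equality to this half-plane.
-/

open MeasureTheory Set

/-- `(ℰ f)(u) = u^{1/2} ∑_{n ≥ 1} f(n u)`. -/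
noncomputable def Emap (f : ℝ → ℂ) (u : ℝ) : ℂ :=
  (u : ℂ) ^ ((1 : ℂ)/2) * ∑' n : ℕ, f ((n + 1) * u)

/-- `ψ_f(z) = ∫₀^∞ f(u) u^{1/2 - iz} du/u`. -/
noncomputable def psi (f : ℝ → ℂ) (z : ℂ) : ℂ :=
  ∫ u in Ioi (0:ℝ), f u * (u : ℂ) ^ ((1 : ℂ)/2 - Complex.I * z) / (u : ℂ)

open Filter Topology Asymptotics

section Decay

variable {E : Type*} [NormedAddCommGroup E] {f : ℝ → E} {a u : ℝ}

/-- The sum over dilations `∑_{n ≥ 1} f(nu)`, which is `ℰf` without the factor `u^{1/2}`; the index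
is shifted by one. -/
noncomputable def dilationSum (f : ℝ → E) (u : ℝ) : E := ∑' n : ℕ, f ((n + 1) * u)

lemma summable_nat_add_one_rpow {r : ℝ} (hr : r < -1) :
    Summable fun n : ℕ => ((n : ℝ) + 1) ^ r := by
  simpa using (summable_nat_add_iff 1).2 (Real.summable_nat_rpow.2 hr)

lemma isBigO_principal_Ici {F : Type*} [NormedAddCommGroup F] {g : ℝ → F} {c : ℝ}
    (hf : ContinuousOn f (Ici c)) (hg : ContinuousOn g (Ici c)) (hg0 : ∀ x ∈ Ici c, g x ≠ 0)
    (h : f =O[atTop] g) : f =O[𝓟 (Ici c)] g := by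
  obtain ⟨C, hC⟩ := h.bound
  obtain ⟨R, hR⟩ := eventually_atTop.1 hC
  have h_tail : f =O[𝓟 (Ici R)] g := isBigO_principal.2 ⟨C, hR⟩
  have h_compact : f =O[𝓟 (Icc c R)] g := by
    have h1 : f =O[𝓟 (Icc c R)] fun _ => (1 : ℝ) :=
      (hf.mono Icc_subset_Ici_self).isBigO_principal isCompact_Icc (by simp)
    have h2 : (fun _ => (1 : ℝ)) =O[𝓟 (Icc c R)] g :=
      (hg.mono Icc_subset_Ici_self).isBigO_rev_principal isCompact_Icc
        (fun x hx => hg0 x hx.1) 1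
    exact h1.trans h2
  refine (h_compact.sup h_tail).mono ?_
  rw [sup_principal, le_principal_iff, mem_principal]
  intro x hx
  exact (le_total x R).imp (fun h => ⟨hx, h⟩) id

lemma isBigO_nhdsGT_zero_of_norm_le {C : ℝ} (hbdd : ∀ u, 0 < u → ‖f u‖ ≤ C) :
    f =O[𝓝[>] 0] (· ^ (-(0 : ℝ))) := by
  refine IsBigO.of_bound C ?_
  filter_upwards [self_mem_nhdsWithin] with u hu
  simpa using hbdd u hu

lemma norm_comp_nat_add_one_mul_le {c C : ℝ} (hc : 0 < c)
    (hC : ∀ x ∈ Ici c, ‖f x‖ ≤ C * ‖x ^ (-a)‖) (hu : u ∈ Ici c) (n : ℕ) :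
    ‖f ((n + 1) * u)‖ ≤ C * u ^ (-a) * ((n : ℝ) + 1) ^ (-a) := by
  have hu0 : 0 < u := hc.trans_le hu
  have h_mem : ((n : ℝ) + 1) * u ∈ Ici c :=
    le_trans hu (le_mul_of_one_le_left hu0.le (by simp))
  calc ‖f ((n + 1) * u)‖ ≤ C * ‖(((n : ℝ) + 1) * u) ^ (-a)‖ := hC _ h_mem
    _ = C * u ^ (-a) * ((n : ℝ) + 1) ^ (-a) := by
      rw [Real.norm_of_nonneg (by positivity), Real.mul_rpow (by positivity) hu0.le]
      ring

lemma isBigO_dilationSum (ha : 1 < a) (hO : f =O[atTop] (· ^ (-a))) :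
    dilationSum f =O[atTop] (· ^ (-a)) := by
  obtain ⟨C, hC⟩ := hO.bound
  obtain ⟨R, hR⟩ := eventually_atTop.1 hC
  have hbound : ∀ x ∈ Ici (max R 1), ‖f x‖ ≤ C * ‖x ^ (-a)‖ :=
    fun x hx => hR x (le_of_max_le_left hx)
  refine IsBigO.of_bound (C * ∑' n : ℕ, ((n : ℝ) + 1) ^ (-a)) ?_
  filter_upwards [eventually_ge_atTop (max R 1)] with u hu
  have hu0 : 0 < u := zero_lt_one.trans_le (le_of_max_le_right hu)
  have hsum := (summable_nat_add_one_rpow (neg_lt_neg ha)).hasSum.mul_left (C * u ^ (-a))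
  rw [Real.norm_of_nonneg (by positivity), mul_right_comm]
  exact tsum_of_norm_bounded hsum (norm_comp_nat_add_one_mul_le (by positivity) hbound hu)

variable [CompleteSpace E]

lemma summable_comp_nat_add_one_mul (ha : 1 < a) (hO : f =O[atTop] (· ^ (-a))) (hu : 0 < u) :
    Summable fun n : ℕ => f ((n + 1) * u) := by
  have htop : Tendsto (fun n : ℕ => ((n : ℝ) + 1) * u) atTop atTop :=
    (tendsto_atTop_add_const_right _ 1 tendsto_natCast_atTop_atTop).atTop_mul_const hu
  refine summable_of_isBigO_nat ?_ (hO.comp_tendsto htop)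
  have h_mul (n : ℕ) : (((n : ℝ) + 1) * u) ^ (-a) = ((n : ℝ) + 1) ^ (-a) * u ^ (-a) :=
    Real.mul_rpow (by positivity) hu.le
  simpa only [Function.comp_def, h_mul] using
    (summable_nat_add_one_rpow (neg_lt_neg ha)).mul_right (u ^ (-a))

lemma continuousOn_dilationSum (hf : ContinuousOn f (Ioi 0)) (ha : 1 < a)
    (hO : f =O[atTop] (· ^ (-a))) : ContinuousOn (dilationSum f) (Ioi 0) := by
  have h_Ici (c : ℝ) (hc : 0 < c) : ContinuousOn (dilationSum f) (Ici c) := by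
    have h_sub : Ici c ⊆ Ioi 0 := Ici_subset_Ioi.2 hc
    obtain ⟨C, hC⟩ := isBigO_principal.1 <| isBigO_principal_Ici (hf.mono h_sub)
      (continuousOn_id.rpow_const fun x hx => .inl (h_sub hx).ne')
      (fun x hx => (Real.rpow_pos_of_pos (h_sub hx) _).ne') hO
    have hC0 : 0 ≤ C := by
      have := (norm_nonneg _).trans (hC c self_mem_Ici)
      exact nonneg_of_mul_nonneg_left this (norm_pos_iff.2 (Real.rpow_pos_of_pos hc _).ne')
    refine continuousOn_tsum (u := fun n : ℕ => C * c ^ (-a) * ((n : ℝ) + 1) ^ (-a))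
      (fun n => hf.comp (by fun_prop) fun u hu => ?_)
      ((summable_nat_add_one_rpow (neg_lt_neg ha)).mul_left _) fun n u hu => ?_
    · exact mul_pos n.cast_add_one_pos (mem_Ioi.1 (h_sub hu))
    · refine (norm_comp_nat_add_one_mul_le hc hC hu n).trans ?_
      gcongr ?_ * ?_ * _
      exact Real.rpow_le_rpow_of_nonpos hc hu (by linarith)
  intro x hx
  have hx : 0 < x := hx
  exact ((h_Ici (x / 2) (by positivity)).continuousAt
    (Ici_mem_nhds (half_lt_self hx))).continuousWithinAt

end Decay

section RiemannSum

variable {E : Type*} [NormedAddCommGroup E] [NormedSpace ℝ E] [CompleteSpace E] {f : ℝ → E}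

lemma norm_smul_sub_integral_le {a b : ℝ} (hab : a ≤ b)
    (hf : ∀ x ∈ Ioc a b, DifferentiableAt ℝ f x) (hfi : IntervalIntegrable f volume a b)
    (hf' : IntervalIntegrable (deriv f) volume a b) :
    ‖(b - a) • f b - ∫ x in a..b, f x‖ ≤ (b - a) * ∫ x in a..b, ‖deriv f x‖ := by
  have h_eq : (b - a) • f b - ∫ x in a..b, f x = ∫ x in a..b, (f b - f x) := by
    rw [intervalIntegral.integral_sub intervalIntegrable_const hfi,
      intervalIntegral.integral_const]
  have h_osc : ∀ x ∈ uIoc a b, ‖f b - f x‖ ≤ ∫ y in a..b, ‖deriv f y‖ := by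
    intro x hx
    rw [uIoc_of_le hab] at hx
    have hxb : uIcc x b ⊆ Ioc a b := by
      rw [uIcc_of_le hx.2]
      exact Icc_subset_Ioc hx.1 le_rfl
    have h_ftc : ∫ y in x..b, deriv f y = f b - f x :=
      intervalIntegral.integral_deriv_eq_sub (fun y hy => hf y (hxb hy))
        (hf'.mono_set (hxb.trans Ioc_subset_Icc_self |>.trans Icc_subset_uIcc))
    rw [← h_ftc]
    exact (intervalIntegral.norm_integral_le_integral_norm hx.2).trans <|
      intervalIntegral.integral_mono_interval hx.1.le hx.2 le_rfl
        (Eventually.of_forall fun _ => norm_nonneg _) hf'.norm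
  rw [h_eq, mul_comm, ← abs_of_nonneg (sub_nonneg.2 hab)]
  exact intervalIntegral.norm_integral_le_of_norm_le_const h_osc

lemma norm_smul_sum_range_sub_integral_le {u : ℝ} (hu : 0 ≤ u) (N : ℕ)
    (hf : ∀ x ∈ Ioc 0 (N * u), DifferentiableAt ℝ f x)
    (hfi : IntervalIntegrable f volume 0 (N * u))
    (hf' : IntervalIntegrable (deriv f) volume 0 (N * u)) :
    ‖u • ∑ n ∈ Finset.range N, f ((n + 1) * u) - ∫ x in 0..N * u, f x‖ ≤
      u * ∫ x in 0..N * u, ‖deriv f x‖ := by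
  let p (n : ℕ) : ℝ := n * u
  have hp0 : p 0 = 0 := by simp [p]
  have hp_mono : Monotone p := fun m n hmn => by dsimp only [p]; gcongr
  have hp_step (n : ℕ) : p (n + 1) - p n = u := by simp only [p]; push_cast; ring
  have hp_sub (n : ℕ) (hn : n < N) : uIcc (p n) (p (n + 1)) ⊆ uIcc 0 (p N) := by
    rw [← hp0, uIcc_of_le (hp_mono n.le_succ), uIcc_of_le (hp_mono N.zero_le)]
    exact Icc_subset_Icc (hp_mono n.zero_le) (hp_mono hn)
  have h_integral := intervalIntegral.sum_integral_adjacent_intervals (a := p)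
    fun n hn => hfi.mono_set (hp_sub n hn)
  have h_integral' := intervalIntegral.sum_integral_adjacent_intervals (a := p)
    fun n hn => hf'.norm.mono_set (hp_sub n hn)
  rw [hp0] at h_integral h_integral'
  change ‖_ - ∫ x in 0..p N, f x‖ ≤ u * ∫ x in 0..p N, ‖deriv f x‖
  rw [← h_integral, ← h_integral', Finset.smul_sum, ← Finset.sum_sub_distrib, Finset.mul_sum]
  refine norm_sum_le_of_le _ fun n hn => ?_
  have hn : n < N := Finset.mem_range.1 hn
  have h_step := norm_smul_sub_integral_le (hp_mono n.le_succ)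
    (fun x hx => hf x ⟨hp0 ▸ (hp_mono n.zero_le).trans_lt hx.1, hx.2.trans (hp_mono hn)⟩)
    (hfi.mono_set (hp_sub n hn)) (hf'.mono_set (hp_sub n hn))
  rw [hp_step] at h_step
  simpa [p] using h_step

lemma norm_smul_sub_integral_Ioi_le_of_hasSum (hf : DifferentiableOn ℝ f (Ioi 0))
    (hfi : IntegrableOn f (Ioi 0)) (hf' : IntegrableOn (deriv f) (Ioi 0)) {u : ℝ} (hu : 0 < u)
    {S : E} (hS : HasSum (fun n : ℕ => f ((n + 1) * u)) S) :
    ‖u • S - ∫ x in Ioi 0, f x‖ ≤ u * ∫ x in Ioi 0, ‖deriv f x‖ := by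
  have htop : Tendsto (fun N : ℕ => (N : ℝ) * u) atTop atTop :=
    tendsto_natCast_atTop_atTop.atTop_mul_const hu
  have h_interval {g : ℝ → E} (hg : IntegrableOn g (Ioi 0)) (N : ℕ) :
      IntervalIntegrable g volume 0 (N * u) :=
    (intervalIntegrable_iff_integrableOn_Ioc_of_le (by positivity)).2
      (hg.mono_set Ioc_subset_Ioi_self)
  refine le_of_tendsto_of_tendsto'
    ((hS.tendsto_sum_nat.const_smul u).sub
      (intervalIntegral_tendsto_integral_Ioi 0 hfi htop)).norm
    ((intervalIntegral_tendsto_integral_Ioi 0 hf'.norm htop).const_mul u) fun N => ?_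
  exact norm_smul_sum_range_sub_integral_le hu.le N
    (fun x hx => hf.differentiableAt (Ioi_mem_nhds hx.1)) (h_interval hfi N) (h_interval hf' N)

lemma norm_dilationSum_le (hf : DifferentiableOn ℝ f (Ioi 0)) (hfi : IntegrableOn f (Ioi 0))
    (hf' : IntegrableOn (deriv f) (Ioi 0)) (h0 : ∫ x in Ioi 0, f x = 0) {u : ℝ} (hu : 0 < u)
    (hsum : Summable fun n : ℕ => f ((n + 1) * u)) :
    ‖dilationSum f u‖ ≤ ∫ x in Ioi 0, ‖deriv f x‖ := by
  have h := norm_smul_sub_integral_Ioi_le_of_hasSum hf hfi hf' hu hsum.hasSum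
  rw [h0, sub_zero, norm_smul, Real.norm_of_nonneg hu.le] at h
  exact le_of_mul_le_mul_left h hu

lemma norm_le_integral_norm_deriv_Ioi (hf : DifferentiableOn ℝ f (Ioi 0))
    (hf' : IntegrableOn (deriv f) (Ioi 0)) (hlim : Tendsto f atTop (𝓝 0)) {x : ℝ} (hx : 0 < x) :
    ‖f x‖ ≤ ∫ y in Ioi 0, ‖deriv f y‖ := by
  have h_sub : Ioi x ⊆ Ioi 0 := Ioi_subset_Ioi hx.le
  have h_ftc : ∫ y in Ioi x, deriv f y = 0 - f x :=
    integral_Ioi_of_hasDerivAt_of_tendsto'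
      (fun y hy => (hf.differentiableAt (Ioi_mem_nhds (hx.trans_le hy))).hasDerivAt)
      (hf'.mono_set h_sub) hlim
  calc ‖f x‖ = ‖∫ y in Ioi x, deriv f y‖ := by rw [h_ftc, zero_sub, norm_neg]
    _ ≤ ∫ y in Ioi x, ‖deriv f y‖ := norm_integral_le_integral_norm _
    _ ≤ ∫ y in Ioi 0, ‖deriv f y‖ :=
      setIntegral_mono_set hf'.norm (Eventually.of_forall fun _ => norm_nonneg _)
        h_sub.eventuallyLE

end RiemannSum

section Mellin

variable {E : Type*} [NormedAddCommGroup E] [NormedSpace ℂ E] {f : ℝ → E} {s : ℂ} {a C : ℝ}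

lemma mellinConvergent_one_iff : MellinConvergent f 1 ↔ IntegrableOn f (Ioi 0) := by
  simp [MellinConvergent]

lemma mellinConvergent_of_norm_le (hf : ContinuousOn f (Ioi 0))
    (hbdd : ∀ u, 0 < u → ‖f u‖ ≤ C) (hO : f =O[atTop] (· ^ (-a))) (hs : 0 < s.re)
    (hsa : s.re < a) : MellinConvergent f s :=
  mellinConvergent_of_isBigO_rpow (hf.locallyIntegrableOn measurableSet_Ioi) hO hsa
    (isBigO_nhdsGT_zero_of_norm_le hbdd) hs

lemma differentiableAt_mellin_of_norm_le [CompleteSpace E] (hf : ContinuousOn f (Ioi 0))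
    (hbdd : ∀ u, 0 < u → ‖f u‖ ≤ C) (hO : f =O[atTop] (· ^ (-a))) (hs : 0 < s.re)
    (hsa : s.re < a) : DifferentiableAt ℂ (mellin f) s :=
  mellin_differentiableAt_of_isBigO_rpow (hf.locallyIntegrableOn measurableSet_Ioi) hO hsa
    (isBigO_nhdsGT_zero_of_norm_le hbdd) hs

lemma integral_norm_cpow_smul_comp_mul_left (f : ℝ → E) (s : ℂ) {c : ℝ} (hc : 0 < c) :
    ∫ t in Ioi (0 : ℝ), ‖(t : ℂ) ^ (s - 1) • f (c * t)‖ =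
      c ^ (-s.re) * ∫ t in Ioi (0 : ℝ), ‖(t : ℂ) ^ (s - 1) • f t‖ := by
  have h_dilate : ∀ t ∈ Ioi (0 : ℝ), ‖(t : ℂ) ^ (s - 1) • f (c * t)‖ =
      c ^ (1 - s.re) * ‖((c * t : ℝ) : ℂ) ^ (s - 1) • f (c * t)‖ := by
    intro t (ht : 0 < t)
    rw [norm_smul, norm_smul, Complex.norm_cpow_eq_rpow_re_of_pos ht,
      Complex.norm_cpow_eq_rpow_re_of_pos (by positivity), Real.mul_rpow hc.le ht.le,
      ← mul_assoc, ← mul_assoc, ← Real.rpow_add hc]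
    simp
  rw [setIntegral_congr_fun measurableSet_Ioi h_dilate, integral_const_mul,
    integral_comp_mul_left_Ioi (fun t : ℝ => ‖(t : ℂ) ^ (s - 1) • f t‖) 0 hc, mul_zero,
    smul_eq_mul, ← mul_assoc, ← Real.rpow_neg_one c, ← Real.rpow_add hc]
  ring_nf

lemma hasSum_mellin_comp_mul_left {ι : Type*} [Countable ι] {p : ι → ℝ} (hp : ∀ i, 0 < p i)
    (hsum : Summable fun i => p i ^ (-s.re)) (hf : MellinConvergent f s) :
    HasSum (fun i => (p i : ℂ) ^ (-s) • mellin f s) (mellin (fun t => ∑' i, f (p i * t)) s) := by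
  have h_int (i : ι) : MellinConvergent (fun t => f (p i * t)) s :=
    (MellinConvergent.comp_mul_left (hp i)).2 hf
  have h_norm : Summable fun i => ∫ t in Ioi (0 : ℝ), ‖(t : ℂ) ^ (s - 1) • f (p i * t)‖ := by
    simp_rw [fun i => integral_norm_cpow_smul_comp_mul_left f s (hp i)]
    exact hsum.mul_right _
  have h_swap := hasSum_integral_of_summable_integral_norm h_int h_norm
  simp only [tsum_const_smul''] at h_swap
  exact h_swap.congr_fun fun i => (mellin_comp_mul_left f s (hp i)).symm

lemma mellin_dilationSum_of_one_lt_re (hs : 1 < s.re) (hf : MellinConvergent f s) :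
    mellin (dilationSum f) s = riemannZeta s • mellin f s := by
  have h_sum : HasSum (fun n : ℕ => (((n : ℝ) + 1 : ℝ) : ℂ) ^ (-s) • mellin f s)
      (mellin (dilationSum f) s) :=
    hasSum_mellin_comp_mul_left (fun n => n.cast_add_one_pos)
      (summable_nat_add_one_rpow (neg_lt_neg hs)) hf
  have h_zeta : HasSum (fun n : ℕ => (((n : ℝ) + 1 : ℝ) : ℂ) ^ (-s)) (riemannZeta s) := by
    rw [zeta_eq_tsum_one_div_nat_add_one_cpow hs]
    have h := (summable_nat_add_iff 1).2 (Complex.summable_one_div_nat_cpow.2 hs)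
    simpa [Complex.cpow_neg] using h.hasSum
  exact h_sum.unique (h_zeta.smul_const _)

lemma mellinConvergent_of_integrableOn_deriv [CompleteSpace E] (hf : DifferentiableOn ℝ f (Ioi 0))
    (hf' : IntegrableOn (deriv f) (Ioi 0)) (hO : f =O[atTop] (· ^ (-a))) (hs : 0 < s.re)
    (hsa : s.re < a) : MellinConvergent f s := by
  have hlim : Tendsto f atTop (𝓝 0) := hO.trans_tendsto (tendsto_rpow_neg_atTop (hs.trans hsa))
  exact mellinConvergent_of_norm_le hf.continuousOn
    (fun _ => norm_le_integral_norm_deriv_Ioi hf hf' hlim) hO hs hsa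

lemma differentiableAt_mellin_of_integrableOn_deriv [CompleteSpace E]
    (hf : DifferentiableOn ℝ f (Ioi 0)) (hf' : IntegrableOn (deriv f) (Ioi 0))
    (hO : f =O[atTop] (· ^ (-a))) (hs : 0 < s.re) (hsa : s.re < a) :
    DifferentiableAt ℂ (mellin f) s := by
  have hlim : Tendsto f atTop (𝓝 0) := hO.trans_tendsto (tendsto_rpow_neg_atTop (hs.trans hsa))
  exact differentiableAt_mellin_of_norm_le hf.continuousOn
    (fun _ => norm_le_integral_norm_deriv_Ioi hf hf' hlim) hO hs hsa

lemma LFunctionTrivChar₁_one_apply (hs : s ≠ 1) :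
    DirichletCharacter.LFunctionTrivChar₁ 1 s = (s - 1) * riemannZeta s := by
  simp [DirichletCharacter.LFunctionTrivChar₁, hs, DirichletCharacter.LFunctionTrivChar,
    DirichletCharacter.LFunction_modOne_eq]

end Mellin

section Continuation

variable {E : Type*} [NormedAddCommGroup E] [NormedSpace ℂ E] [CompleteSpace E] {f : ℝ → E}
  {a : ℝ} {s : ℂ}

lemma norm_dilationSum_le_of_isBigO (hf : DifferentiableOn ℝ f (Ioi 0))
    (hf' : IntegrableOn (deriv f) (Ioi 0)) (ha : 1 < a) (hO : f =O[atTop] (· ^ (-a)))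
    (h0 : ∫ x in Ioi 0, f x = 0) {u : ℝ} (hu : 0 < u) :
    ‖dilationSum f u‖ ≤ ∫ x in Ioi 0, ‖deriv f x‖ := by
  have hfi : IntegrableOn f (Ioi 0) := mellinConvergent_one_iff.1 <|
    mellinConvergent_of_integrableOn_deriv hf hf' hO (by simp) (by simpa using ha)
  exact norm_dilationSum_le hf hfi hf' h0 hu (summable_comp_nat_add_one_mul ha hO hu)

lemma mellinConvergent_dilationSum (hf : DifferentiableOn ℝ f (Ioi 0))
    (hf' : IntegrableOn (deriv f) (Ioi 0)) (ha : 1 < a) (hO : f =O[atTop] (· ^ (-a)))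
    (h0 : ∫ x in Ioi 0, f x = 0) (hs : 0 < s.re) (hsa : s.re < a) :
    MellinConvergent (dilationSum f) s :=
  mellinConvergent_of_norm_le (continuousOn_dilationSum hf.continuousOn ha hO)
    (fun _ => norm_dilationSum_le_of_isBigO hf hf' ha hO h0) (isBigO_dilationSum ha hO) hs hsa

lemma differentiableAt_mellin_dilationSum (hf : DifferentiableOn ℝ f (Ioi 0))
    (hf' : IntegrableOn (deriv f) (Ioi 0)) (ha : 1 < a) (hO : f =O[atTop] (· ^ (-a)))
    (h0 : ∫ x in Ioi 0, f x = 0) (hs : 0 < s.re) (hsa : s.re < a) :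
    DifferentiableAt ℂ (mellin (dilationSum f)) s :=
  differentiableAt_mellin_of_norm_le (continuousOn_dilationSum hf.continuousOn ha hO)
    (fun _ => norm_dilationSum_le_of_isBigO hf hf' ha hO h0) (isBigO_dilationSum ha hO) hs hsa

theorem mellin_dilationSum (hf : DifferentiableOn ℝ f (Ioi 0))
    (hf' : IntegrableOn (deriv f) (Ioi 0)) (ha : 1 < a) (hO : f =O[atTop] (· ^ (-a)))
    (h0 : ∫ x in Ioi 0, f x = 0) (hs : 0 < s.re) (hsa : s.re < a) (hs1 : s ≠ 1) :
    mellin (dilationSum f) s = riemannZeta s • mellin f s := by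
  let U : Set ℂ := {w | 0 < w.re} ∩ {w | w.re < a}
  have hU : IsOpen U := (isOpen_lt continuous_const Complex.continuous_re).inter
    (isOpen_lt Complex.continuous_re continuous_const)
  have h_analytic_left : AnalyticOnNhd ℂ (fun w => (w - 1) • mellin (dilationSum f) w) U :=
    DifferentiableOn.analyticOnNhd (fun w hw => (DifferentiableAt.smul (by fun_prop)
      (differentiableAt_mellin_dilationSum hf hf' ha hO h0 hw.1 hw.2)).differentiableWithinAt) hU
  have h_analytic_right : AnalyticOnNhd ℂ
      (fun w => DirichletCharacter.LFunctionTrivChar₁ 1 w • mellin f w) U :=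
    DifferentiableOn.analyticOnNhd (fun w hw =>
      ((DirichletCharacter.differentiable_LFunctionTrivChar₁ 1 w).smul
        (differentiableAt_mellin_of_integrableOn_deriv hf hf' hO hw.1
          hw.2)).differentiableWithinAt) hU
  obtain ⟨b, hb1, hba⟩ := exists_between ha
  have h_eventually : ∀ᶠ w : ℂ in 𝓝 b, (w - 1) • mellin (dilationSum f) w =
      DirichletCharacter.LFunctionTrivChar₁ 1 w • mellin f w := by
    filter_upwards [Complex.continuous_re.continuousAt.eventually
      (Ioo_mem_nhds (by simpa using hb1) (by simpa using hba))] with w hw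
    have hw1 : w ≠ 1 := fun h => by simp [h] at hw
    rw [LFunctionTrivChar₁_one_apply hw1, mul_smul, mellin_dilationSum_of_one_lt_re hw.1
      (mellinConvergent_of_integrableOn_deriv hf hf' hO (zero_lt_one.trans hw.1) hw.2)]
  have h_eq := h_analytic_left.eqOn_of_preconnected_of_eventuallyEq h_analytic_right
    ((convex_halfSpace_re_gt 0).inter (convex_halfSpace_re_lt a)).isPreconnected
    (z₀ := (b : ℂ)) ⟨by simpa using zero_lt_one.trans hb1, by simpa using hba⟩ h_eventually
    ⟨hs, hsa⟩
  simp only [LFunctionTrivChar₁_one_apply hs1, mul_smul] at h_eq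
  exact smul_right_injective E (sub_ne_zero.2 hs1) h_eq

end Continuation

lemma Emap_integrand_eq (f : ℝ → ℂ) (z : ℂ) {u : ℝ} (hu : 0 < u) :
    Emap f u * (u : ℂ) ^ (-(Complex.I * z)) / (u : ℂ) =
      (u : ℂ) ^ ((1 / 2 - Complex.I * z) - 1) • dilationSum f u := by
  have hu0 : (u : ℂ) ≠ 0 := Complex.ofReal_ne_zero.2 hu.ne'
  rw [Complex.cpow_sub _ _ hu0, sub_eq_add_neg, Complex.cpow_add _ _ hu0, Complex.cpow_one,
    smul_eq_mul, Emap, dilationSum]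
  ring

lemma integrableOn_Emap_iff_mellinConvergent (f : ℝ → ℂ) (z : ℂ) :
    IntegrableOn (fun u : ℝ => Emap f u * (u : ℂ) ^ (-(Complex.I * z)) / (u : ℂ)) (Ioi 0) ↔
      MellinConvergent (dilationSum f) (1 / 2 - Complex.I * z) :=
  integrableOn_congr_fun (fun _ hu => Emap_integrand_eq f z hu) measurableSet_Ioi

lemma integral_Emap_eq_mellin (f : ℝ → ℂ) (z : ℂ) :
    ∫ u in Ioi (0 : ℝ), Emap f u * (u : ℂ) ^ (-(Complex.I * z)) / (u : ℂ) =
      mellin (dilationSum f) (1 / 2 - Complex.I * z) :=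
  setIntegral_congr_fun measurableSet_Ioi fun _ hu => Emap_integrand_eq f z hu

lemma psi_eq_mellin (f : ℝ → ℂ) (z : ℂ) : psi f z = mellin f (1 / 2 - Complex.I * z) := by
  refine setIntegral_congr_fun measurableSet_Ioi fun u hu => ?_
  have hu0 : (u : ℂ) ≠ 0 := Complex.ofReal_ne_zero.2 (ne_of_gt hu)
  rw [smul_eq_mul, Complex.cpow_sub _ 1 hu0, Complex.cpow_one, mul_comm, div_mul_eq_mul_div]

lemma integral_Ioi_eq_zero_of_even {E : Type*} [NormedAddCommGroup E] [NormedSpace ℝ E] {f : ℝ → E}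
    (hf : Integrable f) (hev : f.Even) (h0 : ∫ x, f x = 0) : ∫ x in Ioi 0, f x = 0 := by
  have h_split := intervalIntegral.integral_Iic_add_Ioi (b := 0) hf.integrableOn hf.integrableOn
  have h_reflect : ∫ x in Iic 0, f x = ∫ x in Ioi 0, f x := by
    simpa [hev _] using (integral_comp_neg_Ioi (0 : ℝ) f).symm
  rw [h_reflect, h0, ← two_smul ℝ] at h_split
  exact (smul_eq_zero_iff_right two_ne_zero).1 h_split

lemma schwartzMap_isBigO_atTop_rpow {E : Type*} [NormedAddCommGroup E] [NormedSpace ℝ E]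
    (f : SchwartzMap ℝ E) (r : ℝ) : f =O[atTop] (· ^ r) := by
  refine ((f.isBigO_cocompact_rpow r).mono atTop_le_cocompact).congr' .rfl ?_
  filter_upwards [eventually_ge_atTop 0] with x hx
  rw [Real.norm_of_nonneg hx]

theorem stmt1_general {f : ℝ → ℂ} (hf : DifferentiableOn ℝ f (Ioi 0))
    (hf' : IntegrableOn (deriv f) (Ioi 0)) (hO : ∀ r : ℝ, f =O[atTop] (· ^ r))
    (h0 : ∫ x in Ioi 0, f x = 0) :
    (∀ z : ℂ, -(1/2) < z.im →
      IntegrableOn (fun u : ℝ => Emap f u * (u : ℂ) ^ (-(Complex.I * z)) / (u : ℂ)) (Ioi 0)) ∧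
    DifferentiableOn ℂ
      (fun z : ℂ => ∫ u in Ioi (0:ℝ), Emap f u * (u : ℂ) ^ (-(Complex.I * z)) / (u : ℂ))
      {z : ℂ | -(1/2) < z.im} ∧
    (∀ z : ℂ, -(1/2) < z.im → z ≠ Complex.I/2 →
      ∫ u in Ioi (0:ℝ), Emap f u * (u : ℂ) ^ (-(Complex.I * z)) / (u : ℂ)
        = riemannZeta (1/2 - Complex.I * z) * psi f z) := by
  have h_re (z : ℂ) (hz : -(1/2) < z.im) : 0 < (1 / 2 - Complex.I * z).re := by
    simp only [Complex.sub_re, Complex.I_mul_re, Complex.div_ofNat_re, Complex.one_re]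
    linarith
  have h_exponent (s : ℂ) : ∃ a : ℝ, 1 < a ∧ s.re < a :=
    (exists_gt (max 1 s.re)).imp fun _ => max_lt_iff.1
  simp only [integrableOn_Emap_iff_mellinConvergent, integral_Emap_eq_mellin, psi_eq_mellin]
  refine ⟨fun z hz => ?_, fun z hz => ?_, fun z hz hz1 => ?_⟩
  all_goals obtain ⟨a, ha, hza⟩ := h_exponent (1 / 2 - Complex.I * z)
  · exact mellinConvergent_dilationSum hf hf' ha (hO _) h0 (h_re z hz) hza
  · have h_diff : DifferentiableAt ℂ (mellin (dilationSum f)) (1 / 2 - Complex.I * z) :=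
      differentiableAt_mellin_dilationSum hf hf' ha (hO _) h0 (h_re z hz) hza
    exact (h_diff.comp z (f := fun z => 1 / 2 - Complex.I * z)
      (by fun_prop)).differentiableWithinAt
  · refine mellin_dilationSum hf hf' ha (hO _) h0 (h_re z hz) hza fun h => hz1 ?_
    linear_combination Complex.I * h + z * Complex.I_sq

theorem stmt1 (f : SchwartzMap ℝ ℂ) (hev : ∀ x : ℝ, f (-x) = f x)
    (hint : ∫ x : ℝ, f x = 0) :
    (∀ z : ℂ, -(1/2) < z.im →
      IntegrableOn (fun u : ℝ => Emap (⇑f) u * (u : ℂ) ^ (-(Complex.I * z)) / (u : ℂ))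
        (Ioi 0)) ∧
    DifferentiableOn ℂ
      (fun z : ℂ => ∫ u in Ioi (0:ℝ), Emap (⇑f) u * (u : ℂ) ^ (-(Complex.I * z)) / (u : ℂ))
      {z : ℂ | -(1/2) < z.im} ∧
    (∀ z : ℂ, -(1/2) < z.im → z ≠ Complex.I/2 →
      ∫ u in Ioi (0:ℝ), Emap (⇑f) u * (u : ℂ) ^ (-(Complex.I * z)) / (u : ℂ)
        = riemannZeta (1/2 - Complex.I * z) * psi (⇑f) z) :=
  stmt1_general f.differentiable.differentiableOn
    (SchwartzMap.derivCLM ℝ ℂ f).integrable.integrableOn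
    (schwartzMap_isBigO_atTop_rpow f) (integral_Ioi_eq_zero_of_even f.integrable hev hint)
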